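/- arXiv:2212.07198 — 2 statements merged into one kernel-verified Lean document; each statement's English description precedes it below -/
import Mathlib

section
/- Let L ≥ 2 and let a, a₁, …, a_{L−1} be positive integers with a ≥ 3, and let x > 1 be the real number whose continued fraction expansion is x = [a; \overline{a₁, …, a_{L−1}, a, a_{L−1}, …, a₁, 2a}]. If x² is an integer, then q_{L−2}(a₂, …, a_{L−1}) = 2·q_{L−2}(a₁, …, a_{L−2}). -/
/-- The sequence of complete quotients of the continued fraction of `x`:
`α₀ = x`, `α_{k+1} = 1/(αₖ - ⌊αₖ⌋)`. -/
noncomputable def cfAlpha (x : ℝ) : ℕ → ℝ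
  | 0 => x
  | k + 1 => 1 / (cfAlpha x k - (⌊cfAlpha x k⌋ : ℝ))

/-- The partial quotients of the continued fraction of `x`: `aₖ = ⌊αₖ⌋`. -/
noncomputable def cfA (x : ℝ) (k : ℕ) : ℤ :=
  ⌊cfAlpha x k⌋

/-- The length of the minimal period of the continued fraction of `x`:
the least `l > 0` with `a_{k+l} = a_k` for all `k ≥ 1`. -/
noncomputable def cfPeriod (x : ℝ) : ℕ :=
  sInf {l : ℕ | 0 < l ∧ ∀ k : ℕ, 1 ≤ k → cfA x (k + l) = cfA x k}
/-- Shifted continuant polynomials: `contq x (n+1) = qₙ(x 1, …, x n)`, where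
`q₋₁ = 0`, `q₀ = 1`, and `qₙ = xₙ·q_{n−1} + q_{n−2}`.  Thus `contq x 0 = q₋₁ = 0`
and `contq x 1 = q₀ = 1`. -/
def contq (x : ℕ → ℤ) : ℕ → ℤ
  | 0 => 0
  | 1 => 1
  | n + 2 => x (n + 1) * contq x (n + 1) + contq x n

/-!
Let `M = (K B; C D)` be the continuant matrix of `u = (a₁, …, a_{L-1})`, so that
`B = q_{L-2}(a₁, …, a_{L-2})`, `C = q_{L-2}(a₂, …, a_{L-1})` and `KD - BC = ±1`. The period without
its last term is the palindrome `u, a, uᵒᵖ`, whose continuant matrix `M (a 1; 1 0) Mᵀ = (P Q; Q R)`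
is symmetric. Since `α_{2L} = x + a`, this matrix maps `x + a` to `1 / (x - a)`, which says
`P (x² - a²) = 2aQ + R`. If `x²` is an integer, this equation and `KD - BC = ±1` give
`aK + 2B ∣ 2 (C - 2B)`. As `0 < B, C ≤ K`, the right-hand side is too small to be nonzero when
`a ≥ 2`; when `a = 1`, a parity consideration improves the divisibility to `K + 2B ∣ C - 2B`.
-/

/-- The word `[c 1, …, c n]`; the index starts at `1`, as for the partial quotients after the
integral part. -/
def initialWord {α : Type*} (c : ℕ → α) (n : ℕ) : List α :=
  (List.range n).map fun i => c (i + 1)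

theorem initialWord_succ {α : Type*} (c : ℕ → α) (n : ℕ) :
    initialWord c (n + 1) = initialWord c n ++ [c (n + 1)] := by
  simp [initialWord, List.range_succ]

theorem initialWord_congr {α : Type*} {c d : ℕ → α} {n : ℕ}
    (h : ∀ i, 1 ≤ i → i ≤ n → c i = d i) : initialWord c n = initialWord d n :=
  List.map_congr_left fun i hi => h (i + 1) (by omega) (List.mem_range.mp hi)

theorem map_initialWord {α β : Type*} (f : α → β) (c : ℕ → α) (n : ℕ) :
    (initialWord c n).map f = initialWord (fun i => f (c i)) n := by
  simp [initialWord]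

theorem forall_mem_initialWord {α : Type*} {c : ℕ → α} {n : ℕ} {p : α → Prop} :
    (∀ b ∈ initialWord c n, p b) ↔ ∀ i, 1 ≤ i → i ≤ n → p (c i) := by
  simp only [initialWord, List.forall_mem_map, List.mem_range]
  exact ⟨fun h i h_one hi => Nat.sub_add_cancel h_one ▸ h (i - 1) (by omega),
    fun h i hi => h (i + 1) (by omega) hi⟩

section ContinuantMatrix

variable {R S : Type*}

/-- The continuant matrix of a word `[b₁, …, bₙ]`, the product of the matrices `!![bᵢ, 1; 1, 0]`.
Its first row is `qₙ(b₁, …, bₙ), q_{n-1}(b₁, …, b_{n-1})` and its second row is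
`q_{n-1}(b₂, …, bₙ), q_{n-2}(b₂, …, b_{n-1})`. -/
def continuantMatrix [CommSemiring R] (w : List R) : Matrix (Fin 2) (Fin 2) R :=
  (w.map fun b => !![b, 1; 1, 0]).prod

theorem continuantMatrix_cons [CommSemiring R] (b : R) (w : List R) :
    continuantMatrix (b :: w) = !![b, 1; 1, 0] * continuantMatrix w := by
  simp [continuantMatrix]

theorem continuantMatrix_cons_zero_zero [CommSemiring R] (b : R) (w : List R) :
    continuantMatrix (b :: w) 0 0 = b * continuantMatrix w 0 0 + continuantMatrix w 1 0 := by
  simp [continuantMatrix_cons, Matrix.mul_apply]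

theorem continuantMatrix_cons_one_zero [CommSemiring R] (b : R) (w : List R) :
    continuantMatrix (b :: w) 1 0 = continuantMatrix w 0 0 := by
  simp [continuantMatrix_cons, Matrix.mul_apply]

theorem continuantMatrix_append [CommSemiring R] (v w : List R) :
    continuantMatrix (v ++ w) = continuantMatrix v * continuantMatrix w := by
  simp [continuantMatrix]

theorem continuantMatrix_singleton [CommSemiring R] (b : R) :
    continuantMatrix [b] = !![b, 1; 1, 0] := by
  simp [continuantMatrix]

theorem continuantMatrix_reverse [CommSemiring R] (w : List R) :
    continuantMatrix w.reverse = (continuantMatrix w).transpose := by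
  have transpose_letter (b : R) : (!![b, 1; 1, 0] : Matrix _ _ R).transpose = !![b, 1; 1, 0] := by
    ext i j; fin_cases i <;> fin_cases j <;> rfl
  simp [continuantMatrix, Matrix.transpose_list_prod, Function.comp_def, transpose_letter]

theorem continuantMatrix_append_cons_reverse [CommSemiring R] {u : List R} {K B C D : R}
    (hu : continuantMatrix u = !![K, B; C, D]) (a : R) :
    continuantMatrix (u ++ a :: u.reverse) =
      !![K * (a * K + 2 * B), a * K * C + B * C + K * D;
        a * K * C + B * C + K * D, a * C ^ 2 + 2 * C * D] := by
  have transpose_eq : (!![K, B; C, D] : Matrix _ _ R).transpose = !![K, C; B, D] := by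
    ext i j; fin_cases i <;> fin_cases j <;> rfl
  rw [continuantMatrix_append, continuantMatrix_cons, continuantMatrix_reverse, hu, transpose_eq,
    Matrix.mul_fin_two, Matrix.mul_fin_two]
  ext i j
  fin_cases i <;> fin_cases j <;> simp <;> ring

theorem continuantMatrix_map [CommSemiring R] [CommSemiring S] (f : R →+* S) (w : List R) :
    continuantMatrix (w.map f) = (continuantMatrix w).map f := by
  change _ = f.mapMatrix _
  have map_letter (b : R) : (!![b, 1; 1, 0] : Matrix _ _ R).map f = !![f b, 1; 1, 0] := by
    ext i j; fin_cases i <;> fin_cases j <;> simp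
  simp [continuantMatrix, map_list_prod, Function.comp_def, map_letter]

theorem isUnit_det_continuantMatrix [CommRing R] (w : List R) :
    IsUnit (continuantMatrix w).det := by
  induction w with
  | nil => simp [continuantMatrix]
  | cons b w ih =>
    rw [continuantMatrix_cons, Matrix.det_mul, Matrix.det_fin_two_of]
    exact IsUnit.mul (by simp) ih

theorem continuantMatrix_initialWord_mulVec [CommSemiring R] {α c : ℕ → R}
    (h : ∀ i, α (i + 1) * α (i + 2) = c (i + 1) * α (i + 2) + 1) (n : ℕ) :
    (continuantMatrix (initialWord c n)).mulVec ![α (n + 1), 1] =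
      (∏ i ∈ Finset.range n, α (i + 2)) • ![α 1, 1] := by
  induction n with
  | zero => simp [initialWord, continuantMatrix]
  | succ n ih =>
    have letter_mulVec : (!![c (n + 1), 1; 1, 0] : Matrix _ _ R).mulVec ![α (n + 2), 1] =
        α (n + 2) • ![α (n + 1), 1] := by
      ext i
      fin_cases i
      · simp [Matrix.mulVec, dotProduct, mul_comm (α (n + 2)), h n]
      · simp [Matrix.mulVec, dotProduct]
    rw [initialWord_succ, continuantMatrix_append, continuantMatrix_singleton,
      ← Matrix.mulVec_mulVec, letter_mulVec, Matrix.mulVec_smul, ih, Finset.prod_range_succ,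
      smul_smul, mul_comm]

section Order

variable [CommSemiring R] [PartialOrder R] [IsStrictOrderedRing R] {w : List R}

theorem continuantMatrix_col_zero_pos_nonneg (hw : ∀ b ∈ w, 1 ≤ b) :
    0 < continuantMatrix w 0 0 ∧ 0 ≤ continuantMatrix w 1 0 := by
  induction w with
  | nil => simp [continuantMatrix]
  | cons b w ih =>
    obtain ⟨hb, hw⟩ := List.forall_mem_cons.mp hw
    obtain ⟨h₀, h₁⟩ := ih hw
    rw [continuantMatrix_cons_zero_zero, continuantMatrix_cons_one_zero]
    exact ⟨add_pos_of_pos_of_nonneg (mul_pos (one_pos.trans_le hb) h₀) h₁, h₀.le⟩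

theorem continuantMatrix_one_zero_mem_Ioc (hw : ∀ b ∈ w, 1 ≤ b) (hne : w ≠ []) :
    continuantMatrix w 1 0 ∈ Set.Ioc 0 (continuantMatrix w 0 0) := by
  obtain _ | ⟨b, w⟩ := w
  · exact absurd rfl hne
  obtain ⟨hb, hw⟩ := List.forall_mem_cons.mp hw
  obtain ⟨h₀, h₁⟩ := continuantMatrix_col_zero_pos_nonneg hw
  rw [continuantMatrix_cons_zero_zero, continuantMatrix_cons_one_zero]
  exact ⟨h₀, le_add_of_le_of_nonneg (le_mul_of_one_le_left h₀.le hb) h₁⟩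

theorem continuantMatrix_zero_one_mem_Ioc (hw : ∀ b ∈ w, 1 ≤ b) (hne : w ≠ []) :
    continuantMatrix w 0 1 ∈ Set.Ioc 0 (continuantMatrix w 0 0) := by
  simpa [continuantMatrix_reverse] using continuantMatrix_one_zero_mem_Ioc (w := w.reverse)
    (by simpa using hw) (by simpa using hne)

end Order

theorem continuantMatrix_initialWord (c : ℕ → ℤ) (n : ℕ) :
    continuantMatrix (initialWord c (n + 1)) =
      !![contq c (n + 2), contq c (n + 1);
        contq (fun i => c (i + 1)) (n + 1), contq (fun i => c (i + 1)) n] := by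
  induction n with
  | zero => simp [initialWord, continuantMatrix, contq]
  | succ n ih =>
    rw [initialWord_succ, continuantMatrix_append, ih, continuantMatrix_singleton]
    simp [contq, mul_comm]

end ContinuantMatrix

section Arithmetic

variable {K B C D a m : ℤ}

theorem mul_add_two_mul_dvd_two_mul_sub (hdet : IsUnit (K * D - B * C))
    (h : K * (a * K + 2 * B) * m =
      2 * a * (a * K * C + B * C + K * D) + a * C ^ 2 + 2 * C * D) :
    a * K + 2 * B ∣ 2 * (C - 2 * B) := by
  rw [← hdet.dvd_mul_left]
  refine ⟨K ^ 2 * m - 2 * a * K * C - C ^ 2 - 2 * (K * D - B * C), ?_⟩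
  linear_combination -K * h

theorem add_two_mul_dvd_sub_two_mul (hdet : IsUnit (K * D - B * C))
    (h : K * (K + 2 * B) * m = 2 * (K * C + B * C + K * D) + C ^ 2 + 2 * C * D) :
    K + 2 * B ∣ C - 2 * B := by
  rw [← hdet.dvd_mul_left]
  -- By `h`, twice this witness is the one used in `mul_add_two_mul_dvd_two_mul_sub` for `a = 1`.
  refine ⟨2 * B * C + C * D - K * B * m, ?_⟩
  linear_combination B * h

theorem eq_two_mul_of_mem_Ioc (ha : 0 < a) (hB : B ∈ Set.Ioc 0 K) (hC : C ∈ Set.Ioc 0 K)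
    (hdet : IsUnit (K * D - B * C))
    (h : K * (a * K + 2 * B) * m =
      2 * a * (a * K * C + B * C + K * D) + a * C ^ 2 + 2 * C * D) :
    C = 2 * B := by
  obtain ⟨B_pos, B_le⟩ := hB
  obtain ⟨C_pos, C_le⟩ := hC
  obtain rfl | two_le : a = 1 ∨ 2 ≤ a := by omega
  · -- For `a = 1`, size alone would not exclude `2 * (C - 2 * B) = ±(K + 2 * B)`.
    have hdvd : K + 2 * B ∣ C - 2 * B :=
      add_two_mul_dvd_sub_two_mul (m := m) hdet (by linear_combination h)
    have := Int.eq_zero_of_abs_lt_dvd hdvd (abs_lt.mpr (by constructor <;> omega))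
    omega
  · have : 2 * K ≤ a * K := mul_le_mul_of_nonneg_right two_le (by omega)
    have := Int.eq_zero_of_abs_lt_dvd (mul_add_two_mul_dvd_two_mul_sub hdet h)
      (abs_lt.mpr (by constructor <;> omega))
    omega

end Arithmetic

theorem continuantMatrix_one_zero_eq_two_mul {u : List ℤ} {a m : ℤ} (hu : ∀ b ∈ u, 1 ≤ b)
    (hne : u ≠ []) (ha : 0 < a)
    (h : continuantMatrix (u ++ a :: u.reverse) 0 0 * m =
      2 * a * continuantMatrix (u ++ a :: u.reverse) 0 1 +
        continuantMatrix (u ++ a :: u.reverse) 1 1) :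
    continuantMatrix u 1 0 = 2 * continuantMatrix u 0 1 := by
  have hdet := isUnit_det_continuantMatrix u
  rw [Matrix.det_fin_two] at hdet
  rw [continuantMatrix_append_cons_reverse (Matrix.eta_fin_two (continuantMatrix u))] at h
  exact eq_two_mul_of_mem_Ioc ha (continuantMatrix_zero_one_mem_Ioc hu hne)
    (continuantMatrix_one_zero_mem_Ioc hu hne) hdet (h.trans (add_assoc _ _ _).symm)

section CompleteQuotients

variable {x : ℝ}

theorem cfAlpha_add (x : ℝ) (m n : ℕ) : cfAlpha x (m + n) = cfAlpha (cfAlpha x m) n := by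
  induction n with
  | zero => rfl
  | succ n ih => rw [← add_assoc, cfAlpha, cfAlpha, ih]

theorem cfA_add (x : ℝ) (m n : ℕ) : cfA x (m + n) = cfA (cfAlpha x m) n := by
  rw [cfA, cfA, cfAlpha_add]

theorem cfAlpha_one (x : ℝ) : cfAlpha x 1 = (Int.fract x)⁻¹ := one_div _

theorem fract_cfAlpha_ne_zero {k : ℕ} (h : cfA x (k + 1) ≠ 0) : Int.fract (cfAlpha x k) ≠ 0 := by
  intro h_fract
  apply h
  rw [cfA, cfAlpha_add, cfAlpha_one, h_fract, inv_zero, Int.floor_zero]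

theorem cfAlpha_mul_cfAlpha_succ {k : ℕ} (h : cfA x (k + 1) ≠ 0) :
    cfAlpha x k * cfAlpha x (k + 1) = cfA x k * cfAlpha x (k + 1) + 1 := by
  have h_inv : Int.fract (cfAlpha x k) * cfAlpha x (k + 1) = 1 := by
    rw [cfAlpha_add, cfAlpha_one, mul_inv_cancel₀ (fract_cfAlpha_ne_zero h)]
  rw [← Int.self_sub_floor] at h_inv
  rw [cfA]
  linear_combination h_inv

theorem genContFract_of_s_get? (x : ℝ) (n : ℕ) :
    (GenContFract.of x).s.get? n =
      if cfA x (n + 1) = 0 then none else some ⟨1, (cfA x (n + 1) : ℝ)⟩ := by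
  induction n generalizing x with
  | zero =>
    rw [zero_add, cfA, cfAlpha_one]
    by_cases h : Int.fract x = 0
    · obtain ⟨a, rfl⟩ : ∃ a : ℤ, (a : ℝ) = x := Int.fract_eq_zero_iff.mp h
      simp [GenContFract.of_s_of_int]
    · have one_le : 1 ≤ (Int.fract x)⁻¹ :=
        (one_le_inv₀ ((Int.fract_nonneg x).lt_of_ne' h)).mpr (Int.fract_lt_one x).le
      rw [if_neg (Int.floor_pos.mpr one_le).ne']
      exact GenContFract.of_s_head h
  | succ n ih => rw [GenContFract.of_s_succ, ih, ← cfAlpha_one, ← cfA_add, add_comm 1]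

theorem cfA_injective : Function.Injective cfA := by
  intro x y h
  have h_of : GenContFract.of x = GenContFract.of y := by
    refine GenContFract.ext ?_ (Stream'.Seq.ext fun n => ?_)
    · rw [GenContFract.of_h_eq_floor, GenContFract.of_h_eq_floor]
      exact congrArg _ (congrFun h 0)
    · rw [genContFract_of_s_get?, genContFract_of_s_get?, h]
  exact tendsto_nhds_unique (GenContFract.of_convergence x)
    (h_of ▸ GenContFract.of_convergence y)

theorem cfAlpha_eq_of_forall_cfA_add_eq {m n : ℕ} (h : ∀ k, cfA x (m + k) = cfA x (n + k)) :
    cfAlpha x m = cfAlpha x n :=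
  cfA_injective (funext fun k => by rw [← cfA_add, ← cfA_add, h])

theorem sub_mul_cfAlpha_one (h : cfA x 1 ≠ 0) : (x - cfA x 0) * cfAlpha x 1 = 1 := by
  have := cfAlpha_mul_cfAlpha_succ (k := 0) h
  rw [cfAlpha.eq_1] at this
  linear_combination this

theorem cfAlpha_eq_self_add_of_periodic {n : ℕ} (hne : ∀ k, cfA x (k + 1) ≠ 0)
    (h_last : cfA x (n + 1) = 2 * cfA x 0)
    (hper : ∀ k, cfA x (k + 1 + (n + 1)) = cfA x (k + 1)) :
    cfAlpha x (n + 1) = x + cfA x 0 := by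
  have h_first := sub_mul_cfAlpha_one (hne 0)
  have h_period : cfAlpha x (n + 2) = cfAlpha x 1 :=
    cfAlpha_eq_of_forall_cfA_add_eq fun k => by
      rw [show n + 2 + k = k + 1 + (n + 1) by ring, hper, add_comm]
  have h_step := cfAlpha_mul_cfAlpha_succ (hne (n + 1))
  rw [h_period, h_last] at h_step
  push_cast at h_step
  refine mul_right_cancel₀ (right_ne_zero_of_mul_eq_one h_first) ?_
  linear_combination h_step - h_first

/-- With `a = cfA x 0`, the matrix of `w` maps `x + a` to `1 / (x - a)`; as it is symmetric, the
linear terms in `x` cancel. -/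
theorem continuantMatrix_mul_sq_sub_sq_of_reverse_eq {n : ℕ} {w : List ℤ}
    (hw : initialWord (cfA x) n = w) (hpal : w.reverse = w) (hne : ∀ k, cfA x (k + 1) ≠ 0)
    (h_last : cfA x (n + 1) = 2 * cfA x 0)
    (hper : ∀ k, cfA x (k + 1 + (n + 1)) = cfA x (k + 1)) :
    (continuantMatrix w 0 0 : ℤ) * (x ^ 2 - cfA x 0 ^ 2) =
      2 * cfA x 0 * (continuantMatrix w 0 1 : ℤ) + (continuantMatrix w 1 1 : ℤ) := by
  have h_symm : continuantMatrix w 1 0 = continuantMatrix w 0 1 := by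
    rw [← Matrix.transpose_apply (continuantMatrix w), ← continuantMatrix_reverse, hpal]
  have h_mobius := continuantMatrix_initialWord_mulVec (α := cfAlpha x)
    (c := fun k => Int.castRingHom ℝ (cfA x k)) (fun i => cfAlpha_mul_cfAlpha_succ (hne (i + 1))) n
  rw [← map_initialWord (Int.castRingHom ℝ), continuantMatrix_map, hw,
    cfAlpha_eq_self_add_of_periodic hne h_last hper] at h_mobius
  have h_num := congrFun h_mobius 0
  have h_den := congrFun h_mobius 1
  simp only [Matrix.mulVec, dotProduct, Fin.sum_univ_two, Matrix.map_apply, Int.coe_castRingHom,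
    Matrix.cons_val_zero, Matrix.cons_val_one, Pi.smul_apply, smul_eq_mul, mul_one,
    h_symm] at h_num h_den
  linear_combination (x - cfA x 0) * h_num - h_den +
    (∏ i ∈ Finset.range n, cfAlpha x (i + 2)) * sub_mul_cfAlpha_one (hne 0)

end CompleteQuotients

/-- The period `(c₁, …, c_{L-1}, a, c_{L-1}, …, c₁, 2a)`, as a function of the positions
`1, …, 2L`. -/
def symmetricPeriod (L : ℕ) (a : ℤ) (c : ℕ → ℤ) (j : ℕ) : ℤ :=
  if j < L then c j else if j = L then a else if j < 2 * L then c (2 * L - j) else 2 * a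

theorem symmetricPeriod_pos {L : ℕ} {a : ℤ} {c : ℕ → ℤ} (ha : 0 < a)
    (hc : ∀ i, 1 ≤ i → i ≤ L - 1 → 0 < c i) {j : ℕ} (hj : 1 ≤ j) :
    0 < symmetricPeriod L a c j := by
  rw [symmetricPeriod]
  split_ifs
  · exact hc _ hj (by omega)
  · exact ha
  · exact hc _ (by omega) (by omega)
  · omega

theorem initialWord_symmetricPeriod (l : ℕ) (a : ℤ) (c : ℕ → ℤ) :
    initialWord (symmetricPeriod (l + 1) a c) (2 * l + 1) =
      initialWord c l ++ a :: (initialWord c l).reverse := by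
  refine List.ext_getElem (by simp [initialWord]; omega) fun i hi _ => ?_
  simp only [initialWord, List.length_map, List.length_range] at hi
  grind [initialWord, symmetricPeriod]

theorem stmt_12_general (L : ℕ) (hL : 2 ≤ L) (a : ℤ) (c : ℕ → ℤ)
    (hc : ∀ i : ℕ, 1 ≤ i → i ≤ L - 1 → 0 < c i)
    (x : ℝ) (hx : 1 < x) (hx0 : cfA x 0 = a)
    (hper : ∀ k : ℕ, 1 ≤ k → cfA x k = symmetricPeriod L a c ((k - 1) % (2 * L) + 1))
    (hint : ∃ n : ℤ, x ^ 2 = (n : ℝ)) :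
    contq (fun i => c (i + 1)) (L - 1) = 2 * contq c (L - 1) := by
  obtain ⟨n, hn⟩ := hint
  obtain ⟨l, rfl⟩ : ∃ l, L = l + 2 := ⟨L - 2, by omega⟩
  have ha : 0 < a := hx0 ▸ Int.floor_pos.mpr hx.le
  have h_period (j : ℕ) (h_one : 1 ≤ j) (hj : j ≤ 2 * (l + 2)) :
      cfA x j = symmetricPeriod (l + 2) a c j := by
    rw [hper j h_one, Nat.mod_eq_of_lt (by omega), Nat.sub_add_cancel h_one]
  have h_word : initialWord (cfA x) (2 * (l + 1) + 1) =
      initialWord c (l + 1) ++ a :: (initialWord c (l + 1)).reverse :=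
    (initialWord_congr fun i h_one hi => h_period i h_one (by omega)).trans
      (initialWord_symmetricPeriod (l + 1) a c)
  have h_ne (k : ℕ) : cfA x (k + 1) ≠ 0 :=
    (hper (k + 1) k.succ_pos ▸ symmetricPeriod_pos ha hc (Nat.succ_pos _)).ne'
  have h_last : cfA x (2 * (l + 2)) = 2 * cfA x 0 := by
    simp [hx0, h_period _ (by omega) le_rfl, symmetricPeriod]
  have h_periodic (k : ℕ) : cfA x (k + 1 + 2 * (l + 2)) = cfA x (k + 1) := by
    rw [hper _ (by omega), hper _ (by omega), Nat.sub_add_comm (by omega), Nat.add_mod_right]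
  have h_sq := continuantMatrix_mul_sq_sub_sq_of_reverse_eq h_word (by simp) h_ne h_last h_periodic
  rw [hn, hx0] at h_sq
  have h_two_mul := continuantMatrix_one_zero_eq_two_mul (m := n - a ^ 2)
    (forall_mem_initialWord.mpr hc) (by simp [initialWord]) ha (by exact_mod_cast h_sq)
  simpa [continuantMatrix_initialWord] using h_two_mul

theorem stmt_12 (L : ℕ) (hL : 2 ≤ L) (a : ℤ) (ha : 3 ≤ a) (c : ℕ → ℤ)
    (hc : ∀ i : ℕ, 1 ≤ i → i ≤ L - 1 → 0 < c i)
    (x : ℝ) (hx : 1 < x) (hx0 : cfA x 0 = a)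
    -- the partial quotients of x are periodic with the (not necessarily minimal)
    -- period (a₁, …, a_{L−1}, a, a_{L−1}, …, a₁, 2a) of length 2L
    (hper : ∀ k : ℕ, 1 ≤ k → cfA x k =
      (fun j : ℕ => if j < L then c j else if j = L then a
        else if j < 2 * L then c (2 * L - j) else 2 * a) ((k - 1) % (2 * L) + 1))
    (hint : ∃ n : ℤ, x ^ 2 = (n : ℝ)) :
    contq (fun i => c (i + 1)) (L - 1) = 2 * contq c (L - 1) :=
  stmt_12_general L hL a c hc x hx hx0 hper hint
end

section
/- Let l ≥ 2 be an even integer and let a₁, …, a_{l−1} be positive integers with a_{l−i} = a_i for 1 ≤ i ≤ l−1. Set E = q_{l−1}(a₁, …, a_{l−1}), F = q_{l−2}(a₁, …, a_{l−2}), G = q_{l−3}(a₂, …, a_{l−2}), so that F² − EG = 1. (1) If F is even (so E, G are odd), set E_± = gcd(F±1, E) and G_± = gcd(F±1, G); then for every integer t, E²·t² + (2F − EFG)·t + (F²/4 − 1)·G² = (E_+²·t − G_−²·(F+2)/2)·(E_−²·t − G_+²·(F−2)/2). (2) If F is odd and E, G are even, set E_± = gcd(F±1, E)/2 and G_± = gcd(F±1,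 G)/2; then for every integer t, (E²/4)·t² + (F − EFG/2)·t + ((F²−4)/4)·G² = (E_+²·t − G_−²·(F+2))·(E_−²·t − G_+²·(F−2)). Moreover, in both cases, for every integer t ≥ t₀ := ⌊FG/E⌋ + 1 both factors are positive integers, and if the value D(t) of the quadratic polynomial is a prime number for some t ≥ t₀, then t = t₀. -/
/-!
Suppose first that `F` is even. Then `F + 1` and `F - 1` are coprime, so the two factorizations
`(F + 1) (F - 1) = E G` have the gcds as a common refinement: `F + 1 = E₊ G₊`, `F - 1 = E₋ G₋`,
`E = E₊ E₋` and `G = G₊ G₋`. Expressed in these four factors, the factorization of the quadratic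
polynomial is a polynomial identity. Multiplying the linear factor `E₊² t - G₋² (F + 2) / 2` by `E₋`
and using `E t > F G` shows that it is positive, and similarly for the other one. Both linear
factors are positive integers at `t₀` and increase strictly, so for `t > t₀` both are at least `2`
and the value of the polynomial is not prime. When `F` is odd, the same argument applies after
halving `F + 1`, `F - 1`, `E` and `G`, since `(F + 1) / 2` and `(F - 1) / 2` are coprime.
-/

theorem contq_add_two (x : ℕ → ℤ) (n : ℕ) :
    contq x (n + 2) = x (n + 1) * contq x (n + 1) + contq x n :=
  rfl

theorem contq_add_two_eq_front (x : ℕ → ℤ) (n : ℕ) :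
    contq x (n + 2) =
      x 1 * contq (fun i ↦ x (i + 1)) (n + 1) + contq (fun i ↦ x (i + 2)) n := by
  induction n using Nat.twoStepInduction with
  | zero => simp [contq]
  | one => simp [contq, mul_comm]
  | more n ih ih_succ =>
    rw [contq_add_two x (n + 2), ih, ih_succ, contq_add_two (fun i ↦ x (i + 1)) (n + 1),
      contq_add_two (fun i ↦ x (i + 2)) n]
    ring

theorem contq_eq_of_reverse {x y : ℕ → ℤ} {n : ℕ}
    (h : ∀ i, 1 ≤ i → i ≤ n → y i = x (n + 1 - i)) : contq y (n + 1) = contq x (n + 1) := by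
  induction n using Nat.twoStepInduction generalizing x with
  | zero => rfl
  | one => simp [contq, h 1 le_rfl le_rfl]
  | more n ih ih_succ =>
    have h_last : y (n + 2) = x 1 := by simpa using h (n + 2) (by lia) le_rfl
    have h_tail : contq y (n + 2) = contq (fun i ↦ x (i + 1)) (n + 2) :=
      ih_succ fun i hi hin ↦ by rw [h i hi (by lia)]; congr 1; lia
    have h_tail₂ : contq y (n + 1) = contq (fun i ↦ x (i + 2)) (n + 1) :=
      ih fun i hi hin ↦ by rw [h i hi (by lia)]; congr 1; lia
    rw [contq_add_two y, contq_add_two_eq_front x, h_last, h_tail, h_tail₂]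

theorem contq_mul_sub_contq_mul (x : ℕ → ℤ) (n : ℕ) :
    contq x (n + 1) * contq (fun i ↦ x (i + 1)) (n + 1) -
      contq x (n + 2) * contq (fun i ↦ x (i + 1)) n = (-1) ^ n := by
  induction n with
  | zero => simp [contq]
  | succ n ih =>
    rw [contq_add_two x (n + 1), contq_add_two (fun i ↦ x (i + 1)), pow_succ]
    linear_combination -ih

theorem contq_sq_sub_contq_mul_of_palindrome {x : ℕ → ℤ} {l : ℕ} (hl : 2 ≤ l)
    (hx : ∀ i, 1 ≤ i → i ≤ l - 1 → x (l - i) = x i) :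
    contq x (l - 1) ^ 2 - contq x l * contq (fun i ↦ x (i + 1)) (l - 2) = (-1) ^ l := by
  obtain ⟨n, rfl⟩ := Nat.exists_eq_add_of_le' hl
  have h_shift : contq (fun i ↦ x (i + 1)) (n + 1) = contq x (n + 1) :=
    contq_eq_of_reverse fun i _ hin ↦ by rw [← hx (i + 1) (by lia) (by lia)]; congr 1; lia
  have h_det := contq_mul_sub_contq_mul x n
  rw [h_shift, ← sq] at h_det
  simpa [pow_add] using h_det

theorem contq_pos {x : ℕ → ℤ} {n : ℕ} (hn : n ≠ 0) (hx : ∀ i, 1 ≤ i → i < n → 0 < x i) :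
    0 < contq x n := by
  induction n using Nat.twoStepInduction with
  | zero => contradiction
  | one => exact one_pos
  | more n ih ih_succ =>
    have h_main : 0 < x (n + 1) * contq x (n + 1) :=
      mul_pos (hx _ (by lia) (by lia)) (ih_succ (by lia) fun i hi hin ↦ hx i hi (by lia))
    obtain rfl | hn := eq_or_ne n 0
    · simpa [contq_add_two, contq] using h_main
    · exact add_pos h_main (ih hn fun i hi hin ↦ hx i hi (by lia))

theorem gcd_mul_gcd_eq_abs_of_dvd_mul {u v e : ℤ} (huv : IsCoprime u v) (h : e ∣ u * v) :
    (Int.gcd u e : ℤ) * Int.gcd v e = |e| := by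
  have h_coprime : Nat.Coprime u.natAbs v.natAbs := Int.isCoprime_iff_gcd_eq_one.mp huv
  have h_dvd : e.natAbs ∣ u.natAbs * v.natAbs := by
    rwa [← Int.natAbs_mul, Int.natAbs_dvd_natAbs]
  rw [Int.abs_eq_natAbs, Int.gcd_comm u, Int.gcd_comm v]
  exact_mod_cast (Nat.gcd_mul_gcd_eq_iff_dvd_mul_of_coprime h_coprime).mpr h_dvd

theorem gcd_mul_gcd_eq_abs_of_mul_eq_mul {u v e g : ℤ} (huv : IsCoprime u v)
    (h : u * v = e * g) : (Int.gcd u e : ℤ) * Int.gcd u g = |u| := by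
  have h_natAbs : e.natAbs * g.natAbs = u.natAbs * v.natAbs := by
    rw [← Int.natAbs_mul, ← Int.natAbs_mul, h]
  rw [Int.abs_eq_natAbs, Int.gcd_comm u, Int.gcd_comm u]
  exact_mod_cast Nat.gcd_mul_gcd_of_coprime_of_mul_eq_mul
    (Int.isCoprime_iff_gcd_eq_one.mp huv) h_natAbs

theorem eq_gcd_of_mul_eq_gcd_mul {c p x y : ℤ} (hc : 0 < c)
    (h : c * p = Int.gcd (c * x) (c * y)) : p = Int.gcd x y := by
  rw [Int.gcd_mul_left, Nat.cast_mul, Int.natCast_natAbs, abs_of_pos hc] at h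
  exact mul_left_cancel₀ hc.ne' h

theorem sq_mul_sub_sq_mul_pos {R : Type*} [CommRing R] [LinearOrder R] [IsStrictOrderedRing R]
    {p m r s c A t : R} (hp : 0 < p) (hm : 0 < m) (hs : 0 ≤ s)
    (hA : A * (m * s) ≤ c * (p * r)) (ht : c * (r * s) < p * m * t) :
    0 < p ^ 2 * t - s ^ 2 * A := by
  refine pos_of_mul_pos_right (a := m) ?_ hm.le
  calc
    0 ≤ s * (c * (p * r) - A * (m * s)) := mul_nonneg hs (sub_nonneg.mpr hA)
    _ = p * (c * (r * s)) - s * (A * (m * s)) := by ring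
    _ < p * (p * m * t) - s * (A * (m * s)) := by gcongr
    _ = m * (p ^ 2 * t - s ^ 2 * A) := by ring

theorem eq_of_prime_mul_of_strictMono {α : Type*} [PartialOrder α] {f g : α → ℤ} {t₀ t : α}
    (hf : StrictMono f) (hg : StrictMono g) (hf₀ : 0 < f t₀) (hg₀ : 0 < g t₀) (ht : t₀ ≤ t)
    (h_prime : Prime (f t * g t)) : t = t₀ := by
  by_contra h_ne
  have h_lt : t₀ < t := lt_of_le_of_ne' ht h_ne
  have hft := hf h_lt
  have hgt := hg h_lt
  rcases h_prime.irreducible.isUnit_or_isUnit rfl with h | h <;>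
    rcases Int.isUnit_iff.mp h with h | h <;> lia

theorem strictMono_sq_mul_sub {p : ℤ} (hp : 0 < p) (b : ℤ) :
    StrictMono fun t ↦ p ^ 2 * t - b := by
  intro t t' h
  dsimp only
  gcongr

theorem quadratic_gcd_factorization {u v e g p m r s c A B t₀ : ℤ} {D : ℤ → ℤ}
    (huv : IsCoprime u v) (hu : 0 ≤ u) (hv : 0 ≤ v) (he : 0 < e) (h : u * v = e * g)
    (hp : p = Int.gcd u e) (hm : m = Int.gcd v e) (hr : r = Int.gcd u g) (hs : s = Int.gcd v g)
    (hD : ∀ t, D t = e ^ 2 * t ^ 2 - (B * u ^ 2 + A * v ^ 2) * t + A * B * g ^ 2)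
    (hA : A * v ≤ c * u) (hB : B * u ≤ c * v) (ht₀ : c * g < e * t₀) :
    (∀ t, D t = (p ^ 2 * t - s ^ 2 * A) * (m ^ 2 * t - r ^ 2 * B)) ∧
      (∀ t, t₀ ≤ t → 0 < p ^ 2 * t - s ^ 2 * A ∧ 0 < m ^ 2 * t - r ^ 2 * B) ∧
      ∀ t, t₀ ≤ t → Prime (D t) → t = t₀ := by
  have hg : 0 ≤ g := nonneg_of_mul_nonneg_right (h ▸ mul_nonneg hu hv) he
  have hpm : p * m = e := by
    rw [hp, hm, gcd_mul_gcd_eq_abs_of_dvd_mul huv ⟨g, h⟩, abs_of_pos he]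
  have hrs : r * s = g := by
    rw [hr, hs, gcd_mul_gcd_eq_abs_of_dvd_mul huv ⟨e, by rw [h, mul_comm]⟩, abs_of_nonneg hg]
  have hpr : p * r = u := by
    rw [hp, hr, gcd_mul_gcd_eq_abs_of_mul_eq_mul huv h, abs_of_nonneg hu]
  have hms : m * s = v := by
    rw [hm, hs, gcd_mul_gcd_eq_abs_of_mul_eq_mul huv.symm (by rw [mul_comm, h]), abs_of_nonneg hv]
  have hp_pos : 0 < p := by
    rw [hp]; exact_mod_cast Int.gcd_pos_of_ne_zero_right u he.ne'
  have hm_pos : 0 < m := by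
    rw [hm]; exact_mod_cast Int.gcd_pos_of_ne_zero_right v he.ne'
  have hr_nonneg : 0 ≤ r := hr ▸ Int.natCast_nonneg _
  have hs_nonneg : 0 ≤ s := hs ▸ Int.natCast_nonneg _
  clear hp hm hr hs
  subst hpm hrs hpr hms
  have h_factor t : D t = (p ^ 2 * t - s ^ 2 * A) * (m ^ 2 * t - r ^ 2 * B) := by
    rw [hD]; ring
  have h_pos t (ht : t₀ ≤ t) : 0 < p ^ 2 * t - s ^ 2 * A ∧ 0 < m ^ 2 * t - r ^ 2 * B := by
    have h_lt : c * (r * s) < p * m * t := ht₀.trans_le (by gcongr)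
    exact ⟨sq_mul_sub_sq_mul_pos hp_pos hm_pos hs_nonneg hA h_lt,
      sq_mul_sub_sq_mul_pos hm_pos hp_pos hr_nonneg hB (by rwa [mul_comm s, mul_comm m])⟩
  exact ⟨h_factor, h_pos, fun t ht h_prime ↦
    eq_of_prime_mul_of_strictMono (strictMono_sq_mul_sub hp_pos _) (strictMono_sq_mul_sub hm_pos _)
      (h_pos t₀ le_rfl).1 (h_pos t₀ le_rfl).2 ht (h_factor t ▸ h_prime)⟩

theorem friesen_quadratic_of_even {k E G : ℤ} (h : (2 * k) ^ 2 - E * G = 1) (t : ℤ) :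
    E ^ 2 * t ^ 2 + (2 * (2 * k) - E * (2 * k) * G) * t + ((2 * k) ^ 2 / 4 - 1) * G ^ 2 =
      E ^ 2 * t ^ 2 - ((k - 1) * (2 * k + 1) ^ 2 + (k + 1) * (2 * k - 1) ^ 2) * t +
        (k + 1) * (k - 1) * G ^ 2 := by
  have h_div : (2 * k) ^ 2 / 4 = k ^ 2 := Int.ediv_eq_of_eq_mul_right (by simp) (by ring)
  rw [h_div]
  linear_combination 2 * k * t * h

theorem friesen_quadratic_of_odd {k e g : ℤ} (h : (k + 1) * k = e * g) (t : ℤ) :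
    (2 * e) ^ 2 / 4 * t ^ 2 + (2 * k + 1 - 2 * e * (2 * k + 1) * (2 * g) / 2) * t +
        ((2 * k + 1) ^ 2 - 4) * (2 * g) ^ 2 / 4 =
      e ^ 2 * t ^ 2 - ((2 * k + 1 - 2) * (k + 1) ^ 2 + (2 * k + 1 + 2) * k ^ 2) * t +
        (2 * k + 1 + 2) * (2 * k + 1 - 2) * g ^ 2 := by
  have h_lead : (2 * e) ^ 2 / 4 = e ^ 2 := Int.ediv_eq_of_eq_mul_right (by simp) (by ring)
  have h_mid : 2 * e * (2 * k + 1) * (2 * g) / 2 = 2 * (2 * k + 1) * (e * g) :=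
    Int.ediv_eq_of_eq_mul_right (by simp) (by ring)
  have h_const : ((2 * k + 1) ^ 2 - 4) * (2 * g) ^ 2 / 4 = ((2 * k + 1) ^ 2 - 4) * g ^ 2 :=
    Int.ediv_eq_of_eq_mul_right (by simp) (by ring)
  rw [h_lead, h_mid, h_const]
  linear_combination 2 * (2 * k + 1) * t * h

theorem stmt_19 (l : ℕ) (hl : 2 ≤ l) (hleven : Even l) (a : ℕ → ℤ)
    (hpos : ∀ i : ℕ, 1 ≤ i → i ≤ l - 1 → 0 < a i)
    (hpal : ∀ i : ℕ, 1 ≤ i → i ≤ l - 1 → a (l - i) = a i)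
    (E F G : ℤ)
    (hE : E = contq a l)                       -- E = q_{l−1}(a₁, …, a_{l−1})
    (hF : F = contq a (l - 1))                 -- F = q_{l−2}(a₁, …, a_{l−2})
    (hG : G = contq (fun i => a (i + 1)) (l - 2)) :  -- G = q_{l−3}(a₂, …, a_{l−2})
    F ^ 2 - E * G = 1 ∧
    -- Case (1): F even (so E and G odd), with E_± = gcd(F±1, E), G_± = gcd(F±1, G)
    (Even F →
      ∀ Ep Em Gp Gm : ℤ,
        Ep = Int.gcd (F + 1) E → Em = Int.gcd (F - 1) E →
        Gp = Int.gcd (F + 1) G → Gm = Int.gcd (F - 1) G →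
        (∀ t : ℤ,
          E ^ 2 * t ^ 2 + (2 * F - E * F * G) * t + (F ^ 2 / 4 - 1) * G ^ 2 =
            (Ep ^ 2 * t - Gm ^ 2 * ((F + 2) / 2)) *
              (Em ^ 2 * t - Gp ^ 2 * ((F - 2) / 2))) ∧
        (∀ t : ℤ, F * G / E + 1 ≤ t →
          0 < Ep ^ 2 * t - Gm ^ 2 * ((F + 2) / 2) ∧
            0 < Em ^ 2 * t - Gp ^ 2 * ((F - 2) / 2)) ∧
        (∀ t : ℤ, F * G / E + 1 ≤ t →
          Prime (E ^ 2 * t ^ 2 + (2 * F - E * F * G) * t + (F ^ 2 / 4 - 1) * G ^ 2) →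
          t = F * G / E + 1)) ∧
    -- Case (2): F odd and E, G even, with 2·E_± = gcd(F±1, E), 2·G_± = gcd(F±1, G)
    (Odd F → Even E → Even G →
      ∀ Ep Em Gp Gm : ℤ,
        2 * Ep = Int.gcd (F + 1) E → 2 * Em = Int.gcd (F - 1) E →
        2 * Gp = Int.gcd (F + 1) G → 2 * Gm = Int.gcd (F - 1) G →
        (∀ t : ℤ,
          E ^ 2 / 4 * t ^ 2 + (F - E * F * G / 2) * t + (F ^ 2 - 4) * G ^ 2 / 4 =
            (Ep ^ 2 * t - Gm ^ 2 * (F + 2)) * (Em ^ 2 * t - Gp ^ 2 * (F - 2))) ∧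
        (∀ t : ℤ, F * G / E + 1 ≤ t →
          0 < Ep ^ 2 * t - Gm ^ 2 * (F + 2) ∧ 0 < Em ^ 2 * t - Gp ^ 2 * (F - 2)) ∧
        (∀ t : ℤ, F * G / E + 1 ≤ t →
          Prime (E ^ 2 / 4 * t ^ 2 + (F - E * F * G / 2) * t + (F ^ 2 - 4) * G ^ 2 / 4) →
          t = F * G / E + 1)) := by
  have hdet : F ^ 2 - E * G = 1 := by
    rw [hE, hF, hG, contq_sq_sub_contq_mul_of_palindrome hl hpal, hleven.neg_one_pow]
  have hE_pos : 0 < E := hE ▸ contq_pos (by lia) fun i hi hil ↦ hpos i hi (by lia)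
  have hF_pos : 0 < F := hF ▸ contq_pos (by lia) fun i hi hil ↦ hpos i hi (by lia)
  have ht₀ : F * G < E * (F * G / E + 1) :=
    mul_comm E _ ▸ Int.lt_ediv_add_one_mul_self _ hE_pos
  refine ⟨hdet, ?_, ?_⟩
  · intro hF_even Ep Em Gp Gm hEp hEm hGp hGm
    obtain ⟨k, rfl⟩ := hF_even.two_dvd
    rw [show (2 * k + 2) / 2 = k + 1 by lia, show (2 * k - 2) / 2 = k - 1 by lia]
    exact quadratic_gcd_factorization ⟨1 - k, k, by ring⟩ (by lia) (by lia) hE_pos (by linarith)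
      hEp hEm hGp hGm (friesen_quadratic_of_even hdet) (by nlinarith) (by nlinarith) ht₀
  · rintro ⟨k, rfl⟩ hE_even hG_even Ep Em Gp Gm hEp hEm hGp hGm
    obtain ⟨e, rfl⟩ := hE_even.two_dvd
    obtain ⟨g, rfl⟩ := hG_even.two_dvd
    have h_mul : (k + 1) * k = e * g := by linarith
    rw [show 2 * k + 1 + 1 = 2 * (k + 1) by ring] at hEp hGp
    rw [add_sub_cancel_right] at hEm hGm
    exact quadratic_gcd_factorization ⟨1, -1, by ring⟩ (by lia) (by lia) (by lia) h_mul
      (eq_gcd_of_mul_eq_gcd_mul two_pos hEp) (eq_gcd_of_mul_eq_gcd_mul two_pos hEm)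
      (eq_gcd_of_mul_eq_gcd_mul two_pos hGp) (eq_gcd_of_mul_eq_gcd_mul two_pos hGm)
      (friesen_quadratic_of_odd h_mul) (c := 2 * k + 1) (by nlinarith) (by nlinarith) (by linarith)
end
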